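/- arXiv:1506.08927 — 2 statements merged into one kernel-verified Lean document; each statement's English description precedes it below -/
import Mathlib

section
/- Let U = X_{i,j} and V = X_{k,ℓ} be distinct indecomposable representations of Q_ε. Then both (U,V) and (V,U) are exceptional pairs if and only if {i,j} ∩ {k,ℓ} = ∅ and the chords {i,j} and {k,ℓ} do not cross. -/
namespace ESPaper

/-- Source of arrow `a m` (between vertices `m` and `m+1`): `m` if `ε m = +` (true). -/
def asrc (ε : ℕ → Bool) (m : ℕ) : ℕ := if ε m then m else m + 1

/-- Target of arrow `a m`. -/
def atgt (ε : ℕ → Bool) (m : ℕ) : ℕ := if ε m then m + 1 else m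

/-- A representation of the type `A_n` quiver `Q_ε`: finite dimensional vector spaces at the
vertices `1, …, n` (the spaces at the remaining indices are required to be trivial, so that
the maps attached to indices outside `1, …, n-1` carry no information) together with a
linear map along each arrow `a m : asrc ε m → atgt ε m`, `1 ≤ m ≤ n-1`. -/
structure Rep (K : Type) [Field K] (n : ℕ) (ε : ℕ → Bool) : Type 1 where
  V : ℕ → Type
  [instAdd : ∀ m, AddCommGroup (V m)]
  [instMod : ∀ m, Module K (V m)]
  [instFin : ∀ m, FiniteDimensional K (V m)]
  triv : ∀ m, m = 0 ∨ n < m → Subsingleton (V m)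
  φ : ∀ m, V (asrc ε m) →ₗ[K] V (atgt ε m)

attribute [instance] Rep.instAdd Rep.instMod Rep.instFin

/-- A morphism of representations of `Q_ε`. -/
structure RepHom {K : Type} [Field K] {n : ℕ} {ε : ℕ → Bool} (A B : Rep K n ε) where
  app : ∀ m, A.V m →ₗ[K] B.V m
  comm : ∀ m, (app (atgt ε m)).comp (A.φ m) = (B.φ m).comp (app (asrc ε m))

/-- Vertex space of the indecomposable `X_{i,j}` (for `0 ≤ i < j ≤ n`): `K` at the
vertices `i+1, …, j` and `0` elsewhere. -/
def XV (K : Type) [Field K] (n i j m : ℕ) : Submodule K K :=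
  if i + 1 ≤ m ∧ m ≤ j ∧ m ≤ n then ⊤ else ⊥

/-- Arrow map of the indecomposable `X_{i,j}`: the identity whenever both endpoints of the
arrow lie in the support, and zero otherwise. -/
def Xφ (K : Type) [Field K] (n : ℕ) (ε : ℕ → Bool) (i j m : ℕ) :
    XV K n i j (asrc ε m) →ₗ[K] XV K n i j (atgt ε m) :=
  if h : i + 1 ≤ atgt ε m ∧ atgt ε m ≤ j ∧ atgt ε m ≤ n then
    LinearMap.codRestrict _ (XV K n i j (asrc ε m)).subtype
      (fun x => by simp [XV, h.1, h.2.1, h.2.2])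
  else 0

/-- The indecomposable representation `X_{i,j}` of `Q_ε`. -/
def Xrep (K : Type) [Field K] (n : ℕ) (ε : ℕ → Bool) (i j : ℕ) : Rep K n ε where
  V m := XV K n i j m
  instAdd _ := inferInstance
  instMod _ := inferInstance
  instFin _ := inferInstance
  triv m hm := by
    have hneg : ¬ (i + 1 ≤ m ∧ m ≤ j ∧ m ≤ n) := by omega
    have hbot : XV K n i j m = ⊥ := by unfold XV; rw [if_neg hneg]
    show Subsingleton (XV K n i j m)
    rw [hbot]
    infer_instance
  φ m := Xφ K n ε i j m

variable {K : Type} [Field K]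

/-- `Hom(A, B) = 0`. -/
def homZero {n : ℕ} {ε : ℕ → Bool} (A B : Rep K n ε) : Prop :=
  ∀ θ : RepHom A B, ∀ m, θ.app m = 0

/-- `Hom(A, B) ≠ 0`. -/
def homNonzero {n : ℕ} {ε : ℕ → Bool} (A B : Rep K n ε) : Prop :=
  ∃ θ : RepHom A B, ∃ m, θ.app m ≠ 0

/-- `0 → B → E → A → 0` is a short exact sequence. -/
def IsSES {n : ℕ} {ε : ℕ → Bool} {B E A : Rep K n ε}
    (f : RepHom B E) (g : RepHom E A) : Prop :=
  (∀ m, Function.Injective (f.app m)) ∧ (∀ m, Function.Surjective (g.app m)) ∧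
    (∀ m, LinearMap.range (f.app m) = LinearMap.ker (g.app m))

/-- The short exact sequence `0 → B → E → A → 0` splits. -/
def Splits {n : ℕ} {ε : ℕ → Bool} {E A : Rep K n ε} (g : RepHom E A) : Prop :=
  ∃ s : RepHom A E, ∀ m, (g.app m).comp (s.app m) = LinearMap.id

/-- `Ext¹(A, B) ≠ 0`: there is a nonsplit short exact sequence `0 → B → E → A → 0`. -/
def extNonzero {n : ℕ} {ε : ℕ → Bool} (A B : Rep K n ε) : Prop :=
  ∃ (E : Rep K n ε) (f : RepHom B E) (g : RepHom E A), IsSES f g ∧ ¬ Splits g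

/-- `Ext¹(A, B) = 0`. -/
def extZero {n : ℕ} {ε : ℕ → Bool} (A B : Rep K n ε) : Prop := ¬ extNonzero A B

/-- `(U, V)` is an exceptional pair: `Hom(V,U) = 0` and `Ext¹(V,U) = 0`. -/
def ExcPair {n : ℕ} {ε : ℕ → Bool} (U V : Rep K n ε) : Prop := homZero V U ∧ extZero V U


/-- The chords `c = {c.1, c.2}` and `d = {d.1, d.2}` (with `c.1 < c.2`, `d.1 < d.2`) cross. -/
def Crosses (ε : ℕ → Bool) (c d : ℕ × ℕ) : Prop :=
  (c.1 < d.1 ∧ d.1 < c.2 ∧ c.2 < d.2 ∧ ε d.1 = ε c.2) ∨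
  (d.1 < c.1 ∧ c.1 < d.2 ∧ d.2 < c.2 ∧ ε c.1 = ε d.2) ∨
  (c.1 < d.1 ∧ d.1 < d.2 ∧ d.2 < c.2 ∧ ε d.1 ≠ ε d.2) ∨
  (d.1 < c.1 ∧ c.1 < c.2 ∧ c.2 < d.2 ∧ ε c.1 ≠ ε c.2)

/-- The chords `c` and `d` share an endpoint. -/
def SharesEndpoint (c d : ℕ × ℕ) : Prop :=
  c.1 = d.1 ∨ c.1 = d.2 ∨ c.2 = d.1 ∨ c.2 = d.2

/-- The chord `c` is clockwise from the chord `d` (chords written with `c.1 < c.2`, `d.1 < d.2`). -/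
def Cw (ε : ℕ → Bool) (c d : ℕ × ℕ) : Prop :=
  (c.2 = d.1 ∧ ε c.2 = true) ∨
  (d.2 = c.1 ∧ ε c.1 = false) ∨
  (c.1 = d.1 ∧ ((c.2 < d.2 ∧ ε c.2 = false) ∨ (d.2 < c.2 ∧ ε d.2 = true))) ∨
  (c.2 = d.2 ∧ ((c.1 < d.1 ∧ ε d.1 = false) ∨ (d.1 < c.1 ∧ ε c.1 = true)))

/-- The graph on `{0,…,n} ⊆ ℕ` determined by a finite set of chords. -/
def chordGraph (d : Finset (ℕ × ℕ)) : SimpleGraph ℕ :=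
  SimpleGraph.fromEdgeSet {e : Sym2 ℕ | ∃ c ∈ d, e = s(c.1, c.2)}

/-- The graph on `{0,…,n} ⊆ ℕ` determined by a family of chords. -/
def chordGraphF {k : ℕ} (c : Fin k → ℕ × ℕ) : SimpleGraph ℕ :=
  SimpleGraph.fromEdgeSet {e : Sym2 ℕ | ∃ a : Fin k, e = s((c a).1, (c a).2)}

/-- `d` is a strand diagram on `S_{n,ε}`: valid pairwise-noncrossing chords forming a forest. -/
def IsDiagram (n : ℕ) (ε : ℕ → Bool) (d : Finset (ℕ × ℕ)) : Prop :=
  (∀ c ∈ d, c.1 < c.2 ∧ c.2 ≤ n) ∧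
  (∀ c ∈ d, ∀ c' ∈ d, ¬ Crosses ε c c') ∧
  (chordGraph d).IsAcyclic

/-- The family `c` is a strand diagram (pairwise-noncrossing chords forming a forest). -/
def IsDiagramF {k : ℕ} (ε : ℕ → Bool) (c : Fin k → ℕ × ℕ) : Prop :=
  (∀ a b : Fin k, ¬ Crosses ε (c a) (c b)) ∧ (chordGraphF c).IsAcyclic

/-- The partial order of the poset `P_d`: `x ≤ y` iff there is a chain of chords of `d`
from `x` to `y` in which each chord shares an endpoint with, and is clockwise from,
the previous one. -/
def leD (ε : ℕ → Bool) (d : Finset (ℕ × ℕ)) : ℕ × ℕ → ℕ × ℕ → Prop :=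
  Relation.ReflTransGen (fun x y => x ∈ d ∧ y ∈ d ∧ SharesEndpoint x y ∧ Cw ε y x)

/-!
`Hom(A, B)` and `Ext¹(A, B)` are the kernel and cokernel of the standard differential
`∏ₘ Hom(Aₘ, Bₘ) → ∏ₐ Hom(A_{source a}, B_{target a})`. Between interval modules every space
occurring here is `0` or the line `K`, so up to signs the differential is the difference operator
`t ↦ (t (m + 1) - t m)ₘ`: the functions `t` live on the common support of the two intervals, and
the differences are taken at the arrows inside it together with at most one boundary arrow at each
end. The operator is injective iff there is some boundary arrow, and surjective iff the two are not
both there.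

Exchanging the two modules replaces each boundary arrow by its absence, except that at a common
left or right endpoint no boundary arrow exists in either direction. Thus for overlapping intervals
both pairs are exceptional iff all endpoints differ and exactly one boundary arrow is present, and
two chords with distinct endpoints cross precisely when both or neither are. If the intervals only
share an endpoint, the two boundary arrows coincide and give an extension in one of the two
directions.
-/

section StandardComplex

variable {n : ℕ} {ε : ℕ → Bool}

/-- The differential of the standard two-term complex of a pair of representations: its kernel is
`Hom(A, B)` and its cokernel is `Ext¹(A, B)`. -/
def homDiff (A B : Rep K n ε) :
    (∀ m, A.V m →ₗ[K] B.V m) →ₗ[K] ∀ m, A.V (asrc ε m) →ₗ[K] B.V (atgt ε m) where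
  toFun t m := B.φ m ∘ₗ t (asrc ε m) - t (atgt ε m) ∘ₗ A.φ m
  map_add' s t := by
    funext m
    simp only [Pi.add_apply, LinearMap.comp_add, LinearMap.add_comp]
    abel
  map_smul' c t := by
    funext m
    simp only [Pi.smul_apply, LinearMap.comp_smul, LinearMap.smul_comp, RingHom.id_apply, smul_sub]

theorem homDiff_apply (A B : Rep K n ε) (t : ∀ m, A.V m →ₗ[K] B.V m) (m : ℕ) :
    homDiff A B t m = B.φ m ∘ₗ t (asrc ε m) - t (atgt ε m) ∘ₗ A.φ m :=
  rfl

theorem homDiff_eq_zero_iff {A B : Rep K n ε} {t : ∀ m, A.V m →ₗ[K] B.V m} :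
    homDiff A B t = 0 ↔ ∀ m, t (atgt ε m) ∘ₗ A.φ m = B.φ m ∘ₗ t (asrc ε m) := by
  simp only [funext_iff, homDiff_apply, Pi.zero_apply, sub_eq_zero]
  exact forall_congr' fun m => eq_comm

theorem homZero_iff_injective_homDiff (A B : Rep K n ε) :
    homZero A B ↔ Function.Injective (homDiff A B) := by
  rw [injective_iff_map_eq_zero]
  constructor
  · intro hzero t ht
    exact funext (hzero ⟨t, homDiff_eq_zero_iff.mp ht⟩)
  · intro hinj θ
    exact congrFun (hinj θ.app (homDiff_eq_zero_iff.mpr θ.comm))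

/-- The extension of `A` by `B` with cocycle `d`: the direct sum `B ⊕ A` at every vertex, with
arrow maps twisted by `d`. -/
def extensionRep (A B : Rep K n ε) (d : ∀ m, A.V (asrc ε m) →ₗ[K] B.V (atgt ε m)) :
    Rep K n ε where
  V m := B.V m × A.V m
  triv m hm :=
    have := A.triv m hm
    have := B.triv m hm
    inferInstance
  φ m := ((B.φ m).coprod (d m)).prod (A.φ m ∘ₗ LinearMap.snd K _ _)

/-- The inclusion of `B` into the extension of `A` by `B` with cocycle `d`. -/
def extensionInl (A B : Rep K n ε) (d : ∀ m, A.V (asrc ε m) →ₗ[K] B.V (atgt ε m)) :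
    RepHom B (extensionRep A B d) where
  app m := LinearMap.inl K (B.V m) (A.V m)
  comm m := by
    refine LinearMap.ext fun x => Prod.ext ?_ (map_zero (A.φ m)).symm
    change B.φ m x = B.φ m x + d m 0
    rw [map_zero, add_zero]

/-- The projection of the extension of `A` by `B` with cocycle `d` onto `A`. -/
def extensionSnd (A B : Rep K n ε) (d : ∀ m, A.V (asrc ε m) →ₗ[K] B.V (atgt ε m)) :
    RepHom (extensionRep A B d) A where
  app m := LinearMap.snd K (B.V m) (A.V m)
  comm _ := rfl

theorem isSES_extension (A B : Rep K n ε) (d : ∀ m, A.V (asrc ε m) →ₗ[K] B.V (atgt ε m)) :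
    IsSES (extensionInl A B d) (extensionSnd A B d) :=
  ⟨fun _ => LinearMap.inl_injective, fun _ => LinearMap.snd_surjective,
    fun m => LinearMap.range_inl K (B.V m) (A.V m)⟩

theorem mem_range_homDiff_of_splits {A B : Rep K n ε}
    {d : ∀ m, A.V (asrc ε m) →ₗ[K] B.V (atgt ε m)} (hsplit : Splits (extensionSnd A B d)) :
    d ∈ Set.range (homDiff A B) := by
  obtain ⟨s, hs⟩ := hsplit
  let u : ∀ m, A.V m →ₗ[K] B.V m := fun m => LinearMap.fst K (B.V m) (A.V m) ∘ₗ s.app m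
  refine ⟨-u, funext fun m => LinearMap.ext fun x => ?_⟩
  have hsnd : (s.app (asrc ε m) x).2 = x := LinearMap.congr_fun (hs (asrc ε m)) x
  have hfst : u (atgt ε m) (A.φ m x) = B.φ m (u (asrc ε m) x) + d m (s.app (asrc ε m) x).2 :=
    congrArg Prod.fst (LinearMap.congr_fun (s.comm m) x)
  rw [hsnd] at hfst
  simp only [homDiff_apply, Pi.neg_apply, LinearMap.sub_apply, LinearMap.comp_apply,
    LinearMap.neg_apply, map_neg, hfst]
  abel

theorem exists_cocycle {A B E : Rep K n ε} {f : RepHom B E} {g : RepHom E A} (hfg : IsSES f g)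
    {s : ∀ m, A.V m →ₗ[K] E.V m} (hs : ∀ m, g.app m ∘ₗ s m = LinearMap.id) (m : ℕ) :
    ∃ d : A.V (asrc ε m) →ₗ[K] B.V (atgt ε m),
      f.app (atgt ε m) ∘ₗ d = homDiff A E s m := by
  obtain ⟨finj, -, hexact⟩ := hfg
  have hker : g.app (atgt ε m) ∘ₗ homDiff A E s m = 0 := by
    rw [homDiff_apply, LinearMap.comp_sub, ← LinearMap.comp_assoc, ← LinearMap.comp_assoc,
      g.comm, hs, LinearMap.comp_assoc, hs, LinearMap.comp_id, LinearMap.id_comp, sub_self]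
  have hrange (x) : homDiff A E s m x ∈ LinearMap.range (f.app (atgt ε m)) := by
    rw [hexact]
    exact LinearMap.congr_fun hker x
  exact ⟨(homDiff A E s m).codRestrictOfInjective _ (finj _) hrange,
    LinearMap.codRestrictOfInjective_comp ..⟩

theorem splits_of_surjective_homDiff {A B E : Rep K n ε} {f : RepHom B E} {g : RepHom E A}
    (hfg : IsSES f g) (hsurj : Function.Surjective (homDiff A B)) : Splits g := by
  choose s hs using fun m =>
    (g.app m).exists_rightInverse_of_surjective (LinearMap.range_eq_top.mpr (hfg.2.1 m))
  choose d hd using exists_cocycle hfg hs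
  obtain ⟨t, rfl⟩ := hsurj d
  have hft : homDiff A E (fun m => f.app m ∘ₗ t m) = homDiff A E s := by
    funext m
    rw [← hd, homDiff_apply, homDiff_apply, LinearMap.comp_sub, ← LinearMap.comp_assoc,
      ← f.comm, LinearMap.comp_assoc, LinearMap.comp_assoc]
  have hgf (m) : g.app m ∘ₗ f.app m = 0 :=
    LinearMap.range_le_ker_iff.mp (hfg.2.2 m).le
  have hcorrected : homDiff A E (s - fun m => f.app m ∘ₗ t m) = 0 := by
    rw [map_sub, hft, sub_self]
  refine ⟨⟨_, homDiff_eq_zero_iff.mp hcorrected⟩, fun m => ?_⟩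
  change g.app m ∘ₗ (s m - f.app m ∘ₗ t m) = LinearMap.id
  rw [LinearMap.comp_sub, hs, ← LinearMap.comp_assoc, hgf, LinearMap.zero_comp,
    sub_zero]

theorem extZero_iff_surjective_homDiff (A B : Rep K n ε) :
    extZero A B ↔ Function.Surjective (homDiff A B) := by
  constructor
  · intro hext d
    by_contra hd
    exact hext ⟨_, _, _, isSES_extension A B d, mt mem_range_homDiff_of_splits hd⟩
  · rintro hsurj ⟨E, f, g, hfg, hsplit⟩
    exact hsplit (splits_of_surjective_homDiff hfg hsurj)

end StandardComplex

section ScalarCoefficients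

variable {p q r : Submodule K K}

open Classical in
/-- The scalar by which a linear map between subspaces of the line `K` acts; it is `0` when the
source or the target is the zero subspace. -/
noncomputable def scalarCoeff (f : p →ₗ[K] q) : K :=
  if h : (1 : K) ∈ p then f ⟨1, h⟩ else 0

theorem eq_zero_of_one_notMem (hp : (1 : K) ∉ p) (x : p) : x = 0 := by
  have hbot : p = ⊥ := (Ideal.eq_bot_or_top p).resolve_right (mt (Ideal.eq_top_iff_one p).mp hp)
  exact Subtype.ext ((Submodule.mem_bot K).mp (hbot ▸ x.2))

theorem coe_apply_eq_scalarCoeff_mul (f : p →ₗ[K] q) (x : p) : (f x : K) = scalarCoeff f * x := by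
  by_cases hp : (1 : K) ∈ p
  · have hx : x = (x : K) • ⟨1, hp⟩ := by ext; simp
    rw [scalarCoeff, dif_pos hp]
    conv_lhs => rw [hx, map_smul]
    simp [mul_comm]
  · simp [eq_zero_of_one_notMem hp x]

theorem scalarCoeff_injective : Function.Injective (scalarCoeff : (p →ₗ[K] q) → K) := by
  intro f g hfg
  ext x
  rw [coe_apply_eq_scalarCoeff_mul, hfg, coe_apply_eq_scalarCoeff_mul]

theorem scalarCoeff_eq_zero (f : p →ₗ[K] q) (h : ¬((1 : K) ∈ p ∧ (1 : K) ∈ q)) :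
    scalarCoeff f = 0 := by
  rw [scalarCoeff]
  split_ifs with hp
  · simp [eq_zero_of_one_notMem (fun hq => h ⟨hp, hq⟩) (f ⟨1, hp⟩)]
  · rfl

theorem exists_scalarCoeff_eq {c : K} (hc : ¬((1 : K) ∈ p ∧ (1 : K) ∈ q) → c = 0) :
    ∃ f : p →ₗ[K] q, scalarCoeff f = c := by
  by_cases h : (1 : K) ∈ p ∧ (1 : K) ∈ q
  · have hq : q = ⊤ := (Ideal.eq_top_iff_one q).mpr h.2
    refine ⟨(c • p.subtype).codRestrict q fun x => hq ▸ Submodule.mem_top, ?_⟩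
    simp [scalarCoeff, h.1]
  · exact ⟨0, by rw [hc h, scalarCoeff_eq_zero _ h]⟩

theorem scalarCoeff_comp (g : q →ₗ[K] r) (f : p →ₗ[K] q) :
    scalarCoeff (g ∘ₗ f) = scalarCoeff g * scalarCoeff f := by
  by_cases hp : (1 : K) ∈ p
  · rw [scalarCoeff, dif_pos hp, LinearMap.comp_apply, coe_apply_eq_scalarCoeff_mul g,
      coe_apply_eq_scalarCoeff_mul f, mul_one]
  · rw [scalarCoeff_eq_zero f fun h => hp h.1, scalarCoeff_eq_zero _ fun h => hp h.1, mul_zero]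

theorem scalarCoeff_zero : scalarCoeff (0 : p →ₗ[K] q) = 0 := by
  simp [scalarCoeff]

theorem scalarCoeff_sub (f g : p →ₗ[K] q) :
    scalarCoeff (f - g) = scalarCoeff f - scalarCoeff g := by
  unfold scalarCoeff
  split_ifs <;> simp

end ScalarCoefficients

section DifferenceEquation

open Set

variable {G : Type*} [AddCommGroup G] {a b : ℕ} {D : Set ℕ}

/-- `t` vanishes off `P` and its forward difference is `d` on `D`. -/
def IsSupportedPrimitive (P D : Set ℕ) (d t : ℕ → G) : Prop :=
  (∀ m ∉ P, t m = 0) ∧ ∀ m ∈ D, t (m + 1) - t m = d m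

theorem IsSupportedPrimitive.eq_left_of_mem {t : ℕ → G} (hD : Ioo a b ⊆ D)
    (ht : IsSupportedPrimitive (Ioc a b) D 0 t) {m : ℕ} (hm : m ∈ Ioc a b) : t m = t (a + 1) := by
  obtain ⟨ham, hmb⟩ := hm
  induction m, (ham : a + 1 ≤ m) using Nat.le_induction with
  | base => rfl
  | succ m ham ih =>
    rw [sub_eq_zero.mp (ht.2 m (hD ⟨ham, hmb⟩))]
    exact ih (Nat.le_of_succ_le hmb)

theorem isSupportedPrimitive_zero_unique_iff [Nontrivial G] (hIoo : Ioo a b ⊆ D)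
    (hIcc : D ⊆ Icc a b) :
    (∀ t : ℕ → G, IsSupportedPrimitive (Ioc a b) D 0 t → t = 0) ↔ (a < b → a ∈ D ∨ b ∈ D) := by
  constructor
  · intro hunique hab
    by_contra! hends
    obtain ⟨g, hg⟩ := exists_ne (0 : G)
    have hconst : IsSupportedPrimitive (Ioc a b) D 0 ((Ioc a b).indicator fun _ => g) := by
      refine ⟨fun m hm => indicator_of_notMem hm _, fun m hm => ?_⟩
      have hma : m ≠ a := fun h => hends.1 (h ▸ hm)
      have hmb : m ≠ b := fun h => hends.2 (h ▸ hm)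
      have hmem := hIcc hm
      rw [indicator_of_mem, indicator_of_mem, sub_self, Pi.zero_apply] <;>
        grind
    have hb := congrFun (hunique _ hconst) b
    rw [indicator_of_mem (right_mem_Ioc.mpr hab)] at hb
    exact hg hb
  · intro hends t ht
    funext m
    by_cases hm : m ∈ Ioc a b
    swap
    · exact ht.1 m hm
    have hab : a < b := hm.1.trans_le hm.2
    rw [ht.eq_left_of_mem hIoo hm]
    rcases hends hab with ha | hb
    · rw [sub_eq_zero.mp (ht.2 a ha)]
      exact ht.1 a left_notMem_Ioc
    · rw [← ht.eq_left_of_mem hIoo (right_mem_Ioc.mpr hab), ← sub_eq_zero.mp (ht.2 b hb)]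
      exact ht.1 (b + 1) (by simp)

theorem IsSupportedPrimitive.sum_Icc_eq_zero {d t : ℕ → G} (hab : a ≤ b) (hD : Icc a b ⊆ D)
    (ht : IsSupportedPrimitive (Ioc a b) D d t) : ∑ m ∈ Finset.Icc a b, d m = 0 :=
  calc
    ∑ m ∈ Finset.Icc a b, d m = ∑ m ∈ Finset.Icc a b, (t (m + 1) - t m) :=
      Finset.sum_congr rfl fun m hm => (ht.2 m (hD (Finset.mem_Icc.mp hm))).symm
    _ = t (b + 1) - t a := Finset.sum_Icc_sub hab t
    _ = 0 := by rw [ht.1 (b + 1) (by simp), ht.1 a left_notMem_Ioc, sub_zero]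

theorem exists_isSupportedPrimitive (hIcc : D ⊆ Icc a b) (hends : ¬(a ∈ D ∧ b ∈ D))
    (d : ℕ → G) : ∃ t, IsSupportedPrimitive (Ioc a b) D d t := by
  classical
  let S : ℕ → G := fun m => ∑ r ∈ Finset.range m, d r
  have hS (m) : S (m + 1) - S m = d m := Finset.sum_range_succ_sub_sum d
  -- Anchor the primitive at an end that carries an arrow; the other end is then unconstrained.
  let c := if a ∈ D then a else b + 1
  refine ⟨(Ioc a b).indicator fun m => S m - S c, fun m hm => indicator_of_notMem hm _,
    fun m hm => ?_⟩
  have hmem := hIcc hm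
  rw [← hS m]
  simp only [indicator_apply]
  grind

theorem isSupportedPrimitive_exists_iff [Nontrivial G] (hIoo : Ioo a b ⊆ D) (hIcc : D ⊆ Icc a b) :
    (∀ d : ℕ → G, ∃ t, IsSupportedPrimitive (Ioc a b) D d t) ↔ ¬(a ∈ D ∧ b ∈ D) := by
  refine ⟨fun hexists ⟨ha, hb⟩ => ?_, exists_isSupportedPrimitive hIcc⟩
  have hab : a ≤ b := (hIcc ha).2
  have hD : Icc a b ⊆ D := fun m hm => by
    rcases eq_endpoints_or_mem_Ioo_of_mem_Icc hm with rfl | rfl | hm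
    exacts [ha, hb, hIoo hm]
  obtain ⟨g, hg⟩ := exists_ne (0 : G)
  obtain ⟨t, ht⟩ := hexists (Pi.single a g)
  have hsum := ht.sum_Icc_eq_zero hab hD
  rw [Finset.sum_pi_single', if_pos (Finset.left_mem_Icc.mpr hab)] at hsum
  exact hg hsum

end DifferenceEquation

section LinkingArrows

open Set

variable {ε : ℕ → Bool} {i j k l : ℕ}

/-- The arrows of `Q_ε` from the support of `X_{i,j}` to the support of `X_{k,l}`; they index a
basis of the codomain of `homDiff X_{i,j} X_{k,l}`. -/
def linkingArrows (ε : ℕ → Bool) (i j k l : ℕ) : Set ℕ :=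
  {m | asrc ε m ∈ Ioc i j ∧ atgt ε m ∈ Ioc k l}

/-- The arrow just before the first common vertex of `X_{i,j}` and `X_{k,l}` leads from the support
of `X_{i,j}` to the support of `X_{k,l}`. -/
def LeftLink (ε : ℕ → Bool) (i k : ℕ) : Prop :=
  (i < k ∧ ε k = true) ∨ (k < i ∧ ε i = false)

/-- The arrow just after the last common vertex of `X_{i,j}` and `X_{k,l}` leads from the support
of `X_{i,j}` to the support of `X_{k,l}`. -/
def RightLink (ε : ℕ → Bool) (j l : ℕ) : Prop :=
  (l < j ∧ ε l = false) ∨ (j < l ∧ ε j = true)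

theorem mem_linkingArrows_iff {m : ℕ} :
    m ∈ linkingArrows ε i j k l ↔
      (ε m = true ∧ m ∈ Ioc i j ∧ m + 1 ∈ Ioc k l) ∨
        (ε m = false ∧ m + 1 ∈ Ioc i j ∧ m ∈ Ioc k l) := by
  cases hm : ε m <;> simp [linkingArrows, asrc, atgt, hm]

theorem linkingArrows_subset_Icc : linkingArrows ε i j k l ⊆ Icc (max i k) (min j l) := by
  intro m hm
  rw [mem_linkingArrows_iff] at hm
  grind

theorem Ioo_subset_linkingArrows : Ioo (max i k) (min j l) ⊆ linkingArrows ε i j k l := by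
  intro m hm
  rw [mem_linkingArrows_iff]
  cases ε m <;> grind

theorem max_mem_linkingArrows_iff (hij : i < j) (hkl : k < l) (h : max i k ≤ min j l) :
    max i k ∈ linkingArrows ε i j k l ↔ LeftLink ε i k := by
  rw [mem_linkingArrows_iff, LeftLink]
  grind

theorem min_mem_linkingArrows_iff (hij : i < j) (hkl : k < l) (h : max i k ≤ min j l) :
    min j l ∈ linkingArrows ε i j k l ↔ RightLink ε j l := by
  rw [mem_linkingArrows_iff, RightLink]
  grind

end LinkingArrows

section IntervalModules

open Set

variable {n : ℕ} {ε : ℕ → Bool} {i j k l : ℕ}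

theorem one_mem_XV_iff (hjn : j ≤ n) {m : ℕ} : (1 : K) ∈ XV K n i j m ↔ m ∈ Ioc i j := by
  unfold XV
  split_ifs with h
  · simp only [Submodule.mem_top, true_iff]
    exact ⟨h.1, h.2.1⟩
  · simp only [Submodule.mem_bot, one_ne_zero, false_iff]
    exact fun hm => h ⟨hm.1, hm.2, hm.2.trans hjn⟩

theorem scalarCoeff_Xφ (hjn : j ≤ n) {m : ℕ} (hsrc : asrc ε m ∈ Ioc i j)
    (htgt : atgt ε m ∈ Ioc i j) : scalarCoeff (Xφ K n ε i j m) = 1 := by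
  rw [scalarCoeff, dif_pos ((one_mem_XV_iff hjn).mpr hsrc), Xφ,
    dif_pos ⟨htgt.1, htgt.2, htgt.2.trans hjn⟩]
  rfl

/-- `scalarCoeff` of a linear map between vertex spaces of `X_{i,j}` and `X_{k,l}`. -/
noncomputable def Xcoeff {m m' : ℕ}
    (f : (Xrep K n ε i j).V m →ₗ[K] (Xrep K n ε k l).V m') : K :=
  scalarCoeff (p := XV K n i j m) (q := XV K n k l m') f

theorem Xcoeff_injective {m m' : ℕ} :
    Function.Injective
      (Xcoeff : ((Xrep K n ε i j).V m →ₗ[K] (Xrep K n ε k l).V m') → K) :=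
  scalarCoeff_injective

theorem Xcoeff_zero {m m' : ℕ} :
    Xcoeff (0 : (Xrep K n ε i j).V m →ₗ[K] (Xrep K n ε k l).V m') = 0 :=
  scalarCoeff_zero

theorem Xcoeff_eq_zero (hjn : j ≤ n) (hln : l ≤ n) {m m' : ℕ}
    (f : (Xrep K n ε i j).V m →ₗ[K] (Xrep K n ε k l).V m')
    (h : ¬(m ∈ Ioc i j ∧ m' ∈ Ioc k l)) : Xcoeff f = 0 :=
  scalarCoeff_eq_zero _ (by rwa [one_mem_XV_iff hjn, one_mem_XV_iff hln])

theorem exists_Xcoeff_eq (hjn : j ≤ n) (hln : l ≤ n) {m m' : ℕ} {c : K}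
    (hc : ¬(m ∈ Ioc i j ∧ m' ∈ Ioc k l) → c = 0) :
    ∃ f : (Xrep K n ε i j).V m →ₗ[K] (Xrep K n ε k l).V m', Xcoeff f = c :=
  exists_scalarCoeff_eq (by rwa [one_mem_XV_iff hjn, one_mem_XV_iff hln])

/-- The sign relating the difference of a function along the arrow `a_m` to its forward
difference at `m`. -/
def arrowSign (K : Type) [Field K] (ε : ℕ → Bool) (m : ℕ) : K :=
  if ε m then -1 else 1

theorem arrowSign_mul_cancel (m : ℕ) (c : K) :
    arrowSign K ε m * (arrowSign K ε m * c) = c := by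
  unfold arrowSign
  split_ifs <;> simp

theorem asrc_sub_atgt (t : ℕ → K) (m : ℕ) :
    t (asrc ε m) - t (atgt ε m) = arrowSign K ε m * (t (m + 1) - t m) := by
  unfold asrc atgt arrowSign
  split_ifs <;> ring

theorem Xcoeff_homDiff (hjn : j ≤ n) (hln : l ≤ n)
    (t : ∀ m, (Xrep K n ε i j).V m →ₗ[K] (Xrep K n ε k l).V m) {m : ℕ}
    (hm : m ∈ linkingArrows ε i j k l) :
    Xcoeff (homDiff _ _ t m) = Xcoeff (t (asrc ε m)) - Xcoeff (t (atgt ε m)) := by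
  have hsrc : scalarCoeff (Xφ K n ε k l m) * Xcoeff (t (asrc ε m)) = Xcoeff (t (asrc ε m)) := by
    by_cases h : asrc ε m ∈ Ioc k l
    · rw [scalarCoeff_Xφ hln h hm.2, one_mul]
    · rw [Xcoeff_eq_zero hjn hln _ fun h' => h h'.2, mul_zero]
  have htgt : Xcoeff (t (atgt ε m)) * scalarCoeff (Xφ K n ε i j m) = Xcoeff (t (atgt ε m)) := by
    by_cases h : atgt ε m ∈ Ioc i j
    · rw [scalarCoeff_Xφ hjn hm.1 h, mul_one]
    · rw [Xcoeff_eq_zero hjn hln _ fun h' => h h'.1, zero_mul]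
  rw [← hsrc, ← htgt]
  refine (scalarCoeff_sub _ _).trans ?_
  exact congrArg₂ (· - ·) (scalarCoeff_comp _ _) (scalarCoeff_comp _ _)

theorem homDiff_Xrep_eq_iff (hjn : j ≤ n) (hln : l ≤ n)
    {t : ∀ m, (Xrep K n ε i j).V m →ₗ[K] (Xrep K n ε k l).V m}
    {d : ∀ m, (Xrep K n ε i j).V (asrc ε m) →ₗ[K] (Xrep K n ε k l).V (atgt ε m)} :
    homDiff _ _ t = d ↔
      IsSupportedPrimitive (Ioc (max i k) (min j l)) (linkingArrows ε i j k l)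
        (fun m => arrowSign K ε m * Xcoeff (d m)) fun m => Xcoeff (t m) := by
  have hsupport : ∀ m ∉ Ioc (max i k) (min j l), Xcoeff (t m) = 0 := fun m hm =>
    Xcoeff_eq_zero hjn hln _ (by rwa [← mem_inter_iff, Ioc_inter_Ioc])
  constructor
  · rintro rfl
    refine ⟨hsupport, fun m hm => ?_⟩
    beta_reduce
    rw [Xcoeff_homDiff hjn hln t hm, asrc_sub_atgt (fun m => Xcoeff (t m)), arrowSign_mul_cancel]
  · rintro ⟨-, hdiff⟩
    refine funext fun m => Xcoeff_injective ?_
    by_cases hm : m ∈ linkingArrows ε i j k l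
    · rw [Xcoeff_homDiff hjn hln t hm, asrc_sub_atgt (fun m => Xcoeff (t m)), hdiff m hm,
        arrowSign_mul_cancel]
    · rw [Xcoeff_eq_zero hjn hln _ hm, Xcoeff_eq_zero hjn hln _ hm]

theorem exists_Xcoeff_family_eq (hjn : j ≤ n) (hln : l ≤ n) {t : ℕ → K}
    (ht : ∀ m ∉ Ioc (max i k) (min j l), t m = 0) :
    ∃ T : ∀ m, (Xrep K n ε i j).V m →ₗ[K] (Xrep K n ε k l).V m, (fun m => Xcoeff (T m)) = t := by
  choose T hT using fun m => exists_Xcoeff_eq (K := K) (ε := ε) hjn hln (m := m) (m' := m)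
    fun hm => ht m (by rwa [← Ioc_inter_Ioc])
  exact ⟨T, funext hT⟩

theorem injective_homDiff_Xrep_iff (hjn : j ≤ n) (hln : l ≤ n) :
    Function.Injective (homDiff (Xrep K n ε i j) (Xrep K n ε k l)) ↔
      ∀ t : ℕ → K, IsSupportedPrimitive (Ioc (max i k) (min j l)) (linkingArrows ε i j k l) 0 t →
        t = 0 := by
  have hker (T) : homDiff (Xrep K n ε i j) (Xrep K n ε k l) T = 0 ↔
      IsSupportedPrimitive (Ioc (max i k) (min j l)) (linkingArrows ε i j k l) 0
        fun m => Xcoeff (T m) := by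
    simp only [homDiff_Xrep_eq_iff hjn hln, Xcoeff_zero, mul_zero, Pi.zero_def]
  rw [injective_iff_map_eq_zero]
  constructor
  · intro hinj t ht
    obtain ⟨T, rfl⟩ := exists_Xcoeff_family_eq (ε := ε) hjn hln ht.1
    rw [hinj T ((hker T).mpr ht)]
    exact funext fun m => Xcoeff_zero
  · intro hzero T hT
    exact funext fun m => Xcoeff_injective
      ((congrFun (hzero _ ((hker T).mp hT)) m).trans Xcoeff_zero.symm)

theorem surjective_homDiff_Xrep_iff (hjn : j ≤ n) (hln : l ≤ n) :
    Function.Surjective (homDiff (Xrep K n ε i j) (Xrep K n ε k l)) ↔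
      ∀ d : ℕ → K, ∃ t,
        IsSupportedPrimitive (Ioc (max i k) (min j l)) (linkingArrows ε i j k l) d t := by
  classical
  constructor
  · intro hsurj d
    choose D hD using fun m => exists_Xcoeff_eq (K := K) (ε := ε) hjn hln
      (m := asrc ε m) (m' := atgt ε m)
      (c := if m ∈ linkingArrows ε i j k l then arrowSign K ε m * d m else 0) fun hm => if_neg hm
    obtain ⟨T, hT⟩ := hsurj D
    obtain ⟨hsupport, hdiff⟩ := (homDiff_Xrep_eq_iff hjn hln).mp hT
    refine ⟨_, hsupport, fun m hm => ?_⟩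
    refine (hdiff m hm).trans ?_
    beta_reduce
    rw [hD, if_pos hm, arrowSign_mul_cancel]
  · intro hexists D
    obtain ⟨t, ht⟩ := hexists fun m => arrowSign K ε m * Xcoeff (D m)
    obtain ⟨T, rfl⟩ := exists_Xcoeff_family_eq (ε := ε) hjn hln ht.1
    exact ⟨T, (homDiff_Xrep_eq_iff hjn hln).mpr ht⟩

theorem homZero_Xrep_iff (hij : i < j) (hjn : j ≤ n) (hkl : k < l) (hln : l ≤ n) :
    homZero (Xrep K n ε i j) (Xrep K n ε k l) ↔
      (max i k < min j l → LeftLink ε i k ∨ RightLink ε j l) := by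
  rw [homZero_iff_injective_homDiff, injective_homDiff_Xrep_iff hjn hln,
    isSupportedPrimitive_zero_unique_iff Ioo_subset_linkingArrows linkingArrows_subset_Icc]
  refine forall_congr' fun h => ?_
  rw [max_mem_linkingArrows_iff hij hkl h.le, min_mem_linkingArrows_iff hij hkl h.le]

theorem extZero_Xrep_iff (hij : i < j) (hjn : j ≤ n) (hkl : k < l) (hln : l ≤ n) :
    extZero (Xrep K n ε i j) (Xrep K n ε k l) ↔
      (max i k ≤ min j l → ¬(LeftLink ε i k ∧ RightLink ε j l)) := by
  rw [extZero_iff_surjective_homDiff, surjective_homDiff_Xrep_iff hjn hln,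
    isSupportedPrimitive_exists_iff Ioo_subset_linkingArrows linkingArrows_subset_Icc]
  constructor
  · intro hends h
    rwa [← max_mem_linkingArrows_iff hij hkl h, ← min_mem_linkingArrows_iff hij hkl h]
  · rintro hlinks ⟨hmax, hmin⟩
    have h : max i k ≤ min j l := (linkingArrows_subset_Icc hmax).2
    exact hlinks h ⟨(max_mem_linkingArrows_iff hij hkl h).mp hmax,
      (min_mem_linkingArrows_iff hij hkl h).mp hmin⟩

end IntervalModules

section Chords

variable {n : ℕ} {ε : ℕ → Bool} {i j k l : ℕ}

theorem leftLink_swap (h : i ≠ k) : LeftLink ε k i ↔ ¬LeftLink ε i k := by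
  unfold LeftLink
  grind

theorem rightLink_swap (h : j ≠ l) : RightLink ε l j ↔ ¬RightLink ε j l := by
  unfold RightLink
  grind

theorem not_leftLink_self : ¬LeftLink ε i i := by
  simp [LeftLink]

theorem not_rightLink_self : ¬RightLink ε j j := by
  simp [RightLink]

theorem leftLink_iff_rightLink_of_touch (hij : i < j) (hkl : k < l) (h : max i k = min j l) :
    LeftLink ε i k ↔ RightLink ε j l := by
  unfold LeftLink RightLink
  grind

theorem crosses_iff_of_overlap (hik : i ≠ k) (hjl : j ≠ l) (h : max i k < min j l) :
    Crosses ε (i, j) (k, l) ↔ (LeftLink ε i k ↔ RightLink ε j l) := by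
  obtain ⟨⟨hij, hkj⟩, hil, hkl⟩ : (i < j ∧ k < j) ∧ i < l ∧ k < l := by
    simpa only [max_lt_iff, lt_min_iff] using h
  rcases hik.lt_or_gt with hik | hik <;> rcases hjl.lt_or_gt with hjl | hjl <;>
    simp [Crosses, LeftLink, RightLink, *, hik.not_gt, hjl.not_gt, Bool.eq_not]

theorem not_crosses_of_not_overlap (h : min j l ≤ max i k) : ¬Crosses ε (i, j) (k, l) := by
  unfold Crosses
  grind

theorem excPair_Xrep_iff_of_overlap (hij : i < j) (hjn : j ≤ n) (hkl : k < l) (hln : l ≤ n)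
    (h : max i k < min j l) :
    ExcPair (Xrep K n ε k l) (Xrep K n ε i j) ↔ Xor (LeftLink ε i k) (RightLink ε j l) := by
  rw [ExcPair, homZero_Xrep_iff hij hjn hkl hln, extZero_Xrep_iff hij hjn hkl hln,
    forall_prop_of_true h, forall_prop_of_true h.le, xor_iff_or_and_not_and]

theorem excPair_Xrep_iff_of_touch (hij : i < j) (hjn : j ≤ n) (hkl : k < l) (hln : l ≤ n)
    (h : max i k = min j l) :
    ExcPair (Xrep K n ε k l) (Xrep K n ε i j) ↔ ¬LeftLink ε i k := by
  rw [ExcPair, homZero_Xrep_iff hij hjn hkl hln, extZero_Xrep_iff hij hjn hkl hln,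
    ← leftLink_iff_rightLink_of_touch hij hkl h, and_self, forall_prop_of_true h.le]
  exact and_iff_right fun hlt => absurd h hlt.ne

theorem excPair_Xrep_of_apart (hij : i < j) (hjn : j ≤ n) (hkl : k < l) (hln : l ≤ n)
    (h : min j l < max i k) : ExcPair (Xrep K n ε k l) (Xrep K n ε i j) :=
  ⟨(homZero_Xrep_iff hij hjn hkl hln).mpr fun hlt => absurd h hlt.not_gt,
    (extZero_Xrep_iff hij hjn hkl hln).mpr fun hle => absurd h hle.not_gt⟩

theorem xor_links_both_iff (hne : ¬(i = k ∧ j = l)) :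
    Xor (LeftLink ε k i) (RightLink ε l j) ∧ Xor (LeftLink ε i k) (RightLink ε j l) ↔
      i ≠ k ∧ j ≠ l ∧ ¬(LeftLink ε i k ↔ RightLink ε j l) := by
  by_cases hik : i = k
  · subst hik
    have hjl : j ≠ l := fun h => hne ⟨rfl, h⟩
    simp [not_leftLink_self, rightLink_swap hjl]
  by_cases hjl : j = l
  · subst hjl
    simp [not_rightLink_self, leftLink_swap hik]
  simp [leftLink_swap hik, rightLink_swap hjl, hik, hjl, xor_iff_not_iff, not_iff_not]

end Chords

/-- Lemma 3.5 c): both `(U,V)` and `(V,U)` are exceptional iff the strands share no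
endpoint and do not intersect nontrivially. -/
theorem both_exceptional_iff_disjoint_noncrossing (K : Type) [Field K] (n : ℕ)
    (ε : ℕ → Bool) (i j k l : ℕ) (hij : i < j) (hjn : j ≤ n) (hkl : k < l) (hln : l ≤ n)
    (hne : ¬(i = k ∧ j = l)) :
    (ExcPair (Xrep K n ε i j) (Xrep K n ε k l) ∧
     ExcPair (Xrep K n ε k l) (Xrep K n ε i j)) ↔
      ((i ≠ k ∧ i ≠ l ∧ j ≠ k ∧ j ≠ l) ∧ ¬ Crosses ε (i, j) (k, l)) := by
  rcases lt_trichotomy (max i k) (min j l) with overlap | touch | apart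
  · have overlap' : max k i < min l j := by rwa [max_comm, min_comm]
    have hil : i ≠ l := by grind
    have hjk : j ≠ k := by grind
    rw [excPair_Xrep_iff_of_overlap hkl hln hij hjn overlap',
      excPair_Xrep_iff_of_overlap hij hjn hkl hln overlap, xor_links_both_iff hne]
    grind [crosses_iff_of_overlap]
  · have touch' : max k i = min l j := by rwa [max_comm, min_comm]
    have hik : i ≠ k := by grind
    have hends : i = l ∨ j = k := by grind
    rw [excPair_Xrep_iff_of_touch hkl hln hij hjn touch',
      excPair_Xrep_iff_of_touch hij hjn hkl hln touch, leftLink_swap hik]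
    grind
  · have apart' : min l j < max k i := by rwa [max_comm, min_comm]
    have hends : i ≠ k ∧ i ≠ l ∧ j ≠ k ∧ j ≠ l := by grind
    exact iff_of_true
      ⟨excPair_Xrep_of_apart hkl hln hij hjn apart', excPair_Xrep_of_apart hij hjn hkl hln apart⟩
      ⟨hends, not_crosses_of_not_overlap apart.le⟩

end ESPaper
end

section
/- Let k ≤ n and let X_{i_1,j_1}, …, X_{i_k,j_k} be pairwise distinct indecomposable representations of Q_ε. The sequence (X_{i_1,j_1}, …, X_{i_k,j_k}) is an exceptional sequence if and only if the set of chords d = {{i_1,j_1}, …, {i_k,j_k}} is a strand diagram (no two chords cross and the graph on {0,…,n} with edge set d is a forest) and, for all ℓ < p such that {i_ℓ,j_ℓ} and {i_p,j_p} share an endpoint, the chord {i_ℓ,j_ℓ} is clockwise from {i_p,j_p}. Equivalently, assigning the label k+1−ℓ to the chord {i_ℓ,j_ℓ} yields a good labeling of d, and this assignment gives a bijection between exceptional sequences of Q_ε of length k and strand diagrams with k strands equipped with a good labeling. -/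
namespace ESPaper

variable {K : Type} [Field K]

/-- The sequence `(X_{c 0}, …, X_{c (k-1)})` of indecomposables is an exceptional sequence. -/
def IsExcSeq (K : Type) [Field K] (n : ℕ) {k : ℕ} (ε : ℕ → Bool) (c : Fin k → ℕ × ℕ) : Prop :=
  ∀ a b : Fin k, a < b →
    ExcPair (Xrep K n ε (c a).1 (c a).2) (Xrep K n ε (c b).1 (c b).2)

/-- The set of indecomposables `{X_e : e ∈ d}` is an exceptional collection, i.e. it can be
ordered into an exceptional sequence. -/
def IsExcColl (K : Type) [Field K] (n : ℕ) (ε : ℕ → Bool) (d : Finset (ℕ × ℕ)) : Prop :=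
  ∃ c : Fin d.card → ℕ × ℕ, Function.Injective c ∧ (∀ a, c a ∈ d) ∧ IsExcSeq K n ε c

/-!
`Hom(A, B)` and `Ext¹(A, B)` are the kernel and the cokernel of the coboundary
`θ ↦ (θ_{tgt} ∘ A.φ - B.φ ∘ θ_{src})`. For `A = X_d` and `B = X_c` the supports meet in a half-open
interval `(l, r]`, and a family `θ` is a function `t` supported there whose coboundary is, up to
sign, the difference `t (m + 1) - t m` at the arrows `m` leading from the support of `d` to the
support of `c`. These arrows comprise all `m` strictly between `l` and `r`, and no others except
possibly `l` and `r` themselves. Hence the kernel vanishes unless `l < r` and both boundary arrows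
are missing, and the cokernel vanishes unless both are present. Reading this off from the signs at
`l` and `r` says exactly that the chords do not cross and that `c` is clockwise from `d` if they
share an endpoint.

For the forest condition, `Hom` and `Ext¹` both vanish only if the Euler form of the two supports
does. The Euler form is additive, so its value on the support of `X_d` and the vertices `≤ y`,
as a function of `y`, takes the same value at the two ends of each chord preceding `d` but differs
by `1` between the two ends of `d`. So adding `d` to the earlier chords never closes a cycle.
-/

section Coboundary

variable {n : ℕ} {ε : ℕ → Bool} {A B : Rep K n ε}

/-- The differential of the standard two-term complex of a pair of representations: `Hom(A, B)` is
its kernel and `Ext¹(A, B)` its cokernel. -/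
def coboundary (A B : Rep K n ε) : (∀ m, A.V m →ₗ[K] B.V m) →ₗ[K]
    (∀ m, A.V (asrc ε m) →ₗ[K] B.V (atgt ε m)) where
  toFun θ m := θ (atgt ε m) ∘ₗ A.φ m - B.φ m ∘ₗ θ (asrc ε m)
  map_add' θ θ' := by
    funext m
    simp only [Pi.add_apply, LinearMap.add_comp, LinearMap.comp_add]
    abel
  map_smul' r θ := by
    funext m
    simp only [Pi.smul_apply, LinearMap.smul_comp, LinearMap.comp_smul, smul_sub,
      RingHom.id_apply]

theorem coboundary_apply (θ : ∀ m, A.V m →ₗ[K] B.V m) (m : ℕ) :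
    coboundary A B θ m = θ (atgt ε m) ∘ₗ A.φ m - B.φ m ∘ₗ θ (asrc ε m) := rfl

theorem coboundary_eq_zero_iff {θ : ∀ m, A.V m →ₗ[K] B.V m} : coboundary A B θ = 0 ↔
    ∀ m, θ (atgt ε m) ∘ₗ A.φ m = B.φ m ∘ₗ θ (asrc ε m) := by
  simp only [funext_iff, coboundary_apply, Pi.zero_apply, sub_eq_zero]

theorem homZero_iff_injective_coboundary :
    homZero A B ↔ Function.Injective (coboundary A B) := by
  rw [injective_iff_map_eq_zero]
  constructor
  · intro hHom θ hθ
    exact funext (hHom ⟨θ, coboundary_eq_zero_iff.1 hθ⟩)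
  · intro hker θ
    exact congrFun (hker θ.app (coboundary_eq_zero_iff.2 θ.comm))

/-- The extension of `A` by `B` with underlying spaces `B.V m × A.V m` whose arrow maps are twisted
by the cocycle `ψ`. -/
def twistedSum (ψ : ∀ m, A.V (asrc ε m) →ₗ[K] B.V (atgt ε m)) : Rep K n ε where
  V m := B.V m × A.V m
  triv m hm := by
    have := A.triv m hm
    have := B.triv m hm
    infer_instance
  φ m := (B.φ m ∘ₗ LinearMap.fst K _ _ + ψ m ∘ₗ LinearMap.snd K _ _).prod
    (A.φ m ∘ₗ LinearMap.snd K _ _)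

/-- The inclusion of `B` into a twisted sum. -/
def twistedSumInl (ψ : ∀ m, A.V (asrc ε m) →ₗ[K] B.V (atgt ε m)) : RepHom B (twistedSum ψ) where
  app m := LinearMap.inl K (B.V m) (A.V m)
  comm m := by
    refine LinearMap.ext fun x => Prod.ext ?_ ?_
    · change B.φ m x = B.φ m x + ψ m 0
      rw [map_zero, add_zero]
    · exact (map_zero (A.φ m)).symm

/-- The projection of a twisted sum onto `A`. -/
def twistedSumSnd (ψ : ∀ m, A.V (asrc ε m) →ₗ[K] B.V (atgt ε m)) : RepHom (twistedSum ψ) A where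
  app m := LinearMap.snd K (B.V m) (A.V m)
  comm _ := rfl

theorem isSES_twistedSum (ψ : ∀ m, A.V (asrc ε m) →ₗ[K] B.V (atgt ε m)) :
    IsSES (twistedSumInl ψ) (twistedSumSnd ψ) :=
  ⟨fun m => LinearMap.inl_injective (R := K) (M := B.V m) (M₂ := A.V m),
    fun m => LinearMap.snd_surjective (R := K) (M := B.V m) (M₂ := A.V m),
    fun m => LinearMap.range_inl K (B.V m) (A.V m)⟩

theorem exists_coboundary_eq_of_splits {ψ : ∀ m, A.V (asrc ε m) →ₗ[K] B.V (atgt ε m)}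
    (hψ : Splits (twistedSumSnd ψ)) : ∃ θ, coboundary A B θ = ψ := by
  obtain ⟨s, hs⟩ := hψ
  refine ⟨fun m => LinearMap.fst K (B.V m) (A.V m) ∘ₗ s.app m, ?_⟩
  funext m
  refine LinearMap.ext fun x => sub_eq_iff_eq_add'.2 ?_
  have hsnd : (s.app (asrc ε m) x).2 = x := LinearMap.congr_fun (hs (asrc ε m)) x
  have hfst : (s.app (atgt ε m) (A.φ m x)).1 =
      B.φ m (s.app (asrc ε m) x).1 + ψ m (s.app (asrc ε m) x).2 :=
    congrArg Prod.fst (LinearMap.congr_fun (s.comm m) x)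
  rwa [hsnd] at hfst

theorem exists_comp_eq_of_range_le {R P M N : Type*} [Ring R] [AddCommGroup P] [AddCommGroup M]
    [AddCommGroup N] [Module R P] [Module R M] [Module R N] [Module.Projective R P]
    (f : M →ₗ[R] N) (g : P →ₗ[R] N) (hgf : g.range ≤ f.range) : ∃ h, f ∘ₗ h = g := by
  obtain ⟨h, hh⟩ := Module.projective_lifting_property f.rangeRestrict
    (g.codRestrict f.range fun x => hgf ⟨x, rfl⟩) f.surjective_rangeRestrict
  exact ⟨h, LinearMap.ext fun x => congrArg Subtype.val (LinearMap.congr_fun hh x)⟩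

theorem splits_of_surjective_coboundary (hδ : Function.Surjective (coboundary A B))
    {E : Rep K n ε} {f : RepHom B E} {g : RepHom E A} (hfg : IsSES f g) : Splits g := by
  obtain ⟨-, hg, hexact⟩ := hfg
  choose s hs using fun m =>
    (g.app m).exists_rightInverse_of_surjective (LinearMap.range_eq_top.2 (hg m))
  have hgf (m : ℕ) : g.app m ∘ₗ f.app m = 0 := LinearMap.range_le_ker_iff.1 (hexact m).le
  have hdefect (m : ℕ) : ∃ ψ : A.V (asrc ε m) →ₗ[K] B.V (atgt ε m),
      f.app (atgt ε m) ∘ₗ ψ = s (atgt ε m) ∘ₗ A.φ m - E.φ m ∘ₗ s (asrc ε m) := by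
    refine exists_comp_eq_of_range_le _ _ ?_
    rw [hexact, LinearMap.range_le_ker_iff, LinearMap.comp_sub, ← LinearMap.comp_assoc,
      ← LinearMap.comp_assoc, g.comm, hs, LinearMap.comp_assoc, hs, LinearMap.id_comp,
      LinearMap.comp_id, sub_self]
  choose ψ hψ using hdefect
  obtain ⟨θ, rfl⟩ := hδ ψ
  refine ⟨⟨fun m => s m - f.app m ∘ₗ θ m, fun m => ?_⟩, fun m => ?_⟩
  · have hm := hψ m
    rw [coboundary_apply, LinearMap.comp_sub, ← LinearMap.comp_assoc, ← LinearMap.comp_assoc,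
      f.comm, LinearMap.comp_assoc, sub_eq_sub_iff_sub_eq_sub] at hm
    rw [LinearMap.sub_comp, LinearMap.comp_sub, ← neg_inj, neg_sub, neg_sub]
    simpa only [LinearMap.comp_assoc] using hm
  · rw [LinearMap.comp_sub, hs, ← LinearMap.comp_assoc, hgf, LinearMap.zero_comp, sub_zero]

theorem extZero_iff_surjective_coboundary :
    extZero A B ↔ Function.Surjective (coboundary A B) := by
  constructor
  · intro hExt ψ
    refine exists_coboundary_eq_of_splits (by_contra fun hns => hExt ?_)
    exact ⟨_, _, _, isSES_twistedSum ψ, hns⟩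
  · rintro hδ ⟨E, f, g, hfg, hns⟩
    exact hns (splits_of_surjective_coboundary hδ hfg)

end Coboundary

section DifferenceEquation

variable {M : Type*} [AddCommGroup M] {l r : ℕ} {Q : Set ℕ}

theorem eq_of_forall_succ_eq {α : Type*} {t : ℕ → α}
    (ht : ∀ m ∈ Set.Ioo l r, t (m + 1) = t m) {m : ℕ} (hm : m ∈ Set.Ioc l r) :
    t m = t (l + 1) := by
  obtain ⟨hlm, hmr⟩ := hm
  induction m, hlm using Nat.le_induction with
  | base => rfl
  | succ m hlm ih => rw [ht m ⟨hlm, hmr⟩, ih (Nat.le_of_succ_le hmr)]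

theorem forall_succ_eq_imp_eq_zero_iff [Nontrivial M] (hsub : Set.Ioo l r ⊆ Q)
    (hsup : Q ⊆ Set.Icc l r) :
    (∀ t : ℕ → M, Function.support t ⊆ Set.Ioc l r → (∀ m ∈ Q, t (m + 1) = t m) → t = 0) ↔
      (l < r → l ∈ Q ∨ r ∈ Q) := by
  constructor
  · intro h hlr
    by_contra! hQ
    obtain ⟨a, ha⟩ := exists_ne (0 : M)
    have hstep (m : ℕ) (hm : m ∈ Q) : (Set.Ioc l r).indicator (fun _ => a) (m + 1) =
        (Set.Ioc l r).indicator (fun _ => a) m := by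
      have hml : m ≠ l := fun e => hQ.1 (e ▸ hm)
      have hmr : m ≠ r := fun e => hQ.2 (e ▸ hm)
      obtain ⟨hlm, hmr'⟩ := hsup hm
      rw [Set.indicator_of_mem (Set.mem_Ioc.2 (by omega)),
        Set.indicator_of_mem (Set.mem_Ioc.2 (by omega))]
    have hzero := congrFun (h _ Set.support_indicator_subset hstep) r
    rw [Set.indicator_of_mem (Set.right_mem_Ioc.2 hlr)] at hzero
    exact ha hzero
  · intro hQ t ht hstep
    have hout (m : ℕ) (hm : m ∉ Set.Ioc l r) : t m = 0 := Function.notMem_support.1 (mt (@ht m) hm)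
    have hconst (m : ℕ) (hm : m ∈ Set.Ioc l r) : t m = t (l + 1) :=
      eq_of_forall_succ_eq (fun m hm => hstep m (hsub hm)) hm
    funext m
    by_cases hm : m ∈ Set.Ioc l r
    · have hlr : l < r := hm.1.trans_le hm.2
      rw [hconst m hm, Pi.zero_apply]
      rcases hQ hlr with hl | hr
      · rw [hstep l hl, hout l Set.left_notMem_Ioc]
      · rw [← hconst r (Set.right_mem_Ioc.2 hlr), ← hstep r hr, hout (r + 1) (by simp)]
    · exact hout m hm

theorem sum_Icc_eq_zero_of_forall_sub_eq {t η : ℕ → M} (ht : Function.support t ⊆ Set.Ioc l r)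
    (hη : ∀ m ∈ Set.Icc l r, t (m + 1) - t m = η m) : ∑ m ∈ Finset.Icc l r, η m = 0 := by
  rcases lt_or_ge r l with hrl | hlr
  · rw [Finset.Icc_eq_empty_of_lt hrl, Finset.sum_empty]
  have hout (m : ℕ) (hm : m ∉ Set.Ioc l r) : t m = 0 := Function.notMem_support.1 (mt (@ht m) hm)
  calc ∑ m ∈ Finset.Icc l r, η m = ∑ m ∈ Finset.Ico l (r + 1), (t (m + 1) - t m) :=
        (Finset.sum_congr rfl fun m hm => hη m (by simpa using hm)).symm
    _ = t (r + 1) - t l := Finset.sum_Ico_sub t (by omega)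
    _ = 0 := by rw [hout l (by simp), hout (r + 1) (by simp), sub_zero]

theorem exists_forall_sub_eq_of_left_notMem (hsup : Q ⊆ Set.Icc l r) (hl : l ∉ Q) (η : ℕ → M) :
    ∃ t : ℕ → M, Function.support t ⊆ Set.Ioc l r ∧ ∀ m ∈ Q, t (m + 1) - t m = η m := by
  refine ⟨(Set.Ioc l r).indicator fun m => -∑ i ∈ Finset.Ico m (r + 1), η i,
    Set.support_indicator_subset, fun m hm => ?_⟩
  have hml : m ≠ l := fun e => hl (e ▸ hm)
  obtain ⟨hlm, hmr⟩ := hsup hm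
  rw [Set.indicator_of_mem (a := m) (Set.mem_Ioc.2 (by omega)),
    Finset.sum_eq_sum_Ico_succ_bot (Nat.lt_add_one_of_le hmr)]
  rcases hmr.eq_or_lt with rfl | hmr
  · simp
  · rw [Set.indicator_of_mem (Set.mem_Ioc.2 (by omega))]
    abel

theorem exists_forall_sub_eq_of_right_notMem (hsup : Q ⊆ Set.Icc l r) (hr : r ∉ Q) (η : ℕ → M) :
    ∃ t : ℕ → M, Function.support t ⊆ Set.Ioc l r ∧ ∀ m ∈ Q, t (m + 1) - t m = η m := by
  refine ⟨(Set.Ioc l r).indicator fun m => ∑ i ∈ Finset.Ico l m, η i,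
    Set.support_indicator_subset, fun m hm => ?_⟩
  have hmr : m ≠ r := fun e => hr (e ▸ hm)
  obtain ⟨hlm, hmr'⟩ := hsup hm
  rw [Set.indicator_of_mem (Set.mem_Ioc.2 (by omega)), Finset.sum_Ico_succ_top hlm]
  rcases hlm.eq_or_lt with rfl | hlm
  · simp
  · rw [Set.indicator_of_mem (Set.mem_Ioc.2 (by omega))]
    abel

theorem forall_exists_forall_sub_eq_iff [Nontrivial M] (hsub : Set.Ioo l r ⊆ Q)
    (hsup : Q ⊆ Set.Icc l r) :
    (∀ η : ℕ → M, ∃ t : ℕ → M, Function.support t ⊆ Set.Ioc l r ∧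
      ∀ m ∈ Q, t (m + 1) - t m = η m) ↔ ¬(l ∈ Q ∧ r ∈ Q) := by
  constructor
  · rintro h ⟨hl, hr⟩
    obtain ⟨a, ha⟩ := exists_ne (0 : M)
    obtain ⟨t, ht, hη⟩ := h (Pi.single l a)
    have hQ : Set.Icc l r ⊆ Q := fun m hm => by
      rcases hm.1.eq_or_lt with rfl | hlm
      · exact hl
      rcases hm.2.eq_or_lt with rfl | hmr
      · exact hr
      exact hsub ⟨hlm, hmr⟩
    have hsum := sum_Icc_eq_zero_of_forall_sub_eq ht fun m hm => hη m (hQ hm)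
    rw [Finset.sum_pi_single', if_pos (Finset.mem_Icc.2 (hsup hl))] at hsum
    exact ha hsum
  · intro hQ η
    by_cases hl : l ∈ Q
    · exact exists_forall_sub_eq_of_right_notMem hsup (fun hr => hQ ⟨hl, hr⟩) η
    · exact exists_forall_sub_eq_of_left_notMem hsup hl η

theorem eq_Ioc_or_eq_Ico (hsub : Set.Ioo l r ⊆ Q) (hsup : Q ⊆ Set.Icc l r)
    (hone : l < r → l ∈ Q ∨ r ∈ Q) (hnot : ¬(l ∈ Q ∧ r ∈ Q)) :
    Q = Set.Ioc l r ∨ Q = Set.Ico l r := by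
  simp only [Set.subset_def, Set.mem_Ioo, Set.mem_Icc, Set.ext_iff, Set.mem_Ioc, Set.mem_Ico]
    at hsub hsup ⊢
  by_cases hl : l ∈ Q
  · right
    grind
  · left
    grind

end DifferenceEquation

section Scalars

variable {n : ℕ} {ε : ℕ → Bool} {c d : ℕ × ℕ}

/-- The set of vertices where the indecomposable attached to the chord `c` is nonzero. -/
abbrev supp (c : ℕ × ℕ) : Set ℕ := Set.Ioc c.1 c.2

/-- The arrows of `Q_ε` with source in `D` and target in `C`; an arrow `a m` is represented by its
index `m`. -/
def arrowsBetween (ε : ℕ → Bool) (D C : Set ℕ) : Set ℕ := asrc ε ⁻¹' D ∩ atgt ε ⁻¹' C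

theorem XV_eq_top (hc : c.2 ≤ n) {m : ℕ} (hm : m ∈ supp c) : XV K n c.1 c.2 m = ⊤ :=
  if_pos ⟨hm.1, hm.2, hm.2.trans hc⟩

theorem XV_eq_bot {m : ℕ} (hm : m ∉ supp c) : XV K n c.1 c.2 m = ⊥ :=
  if_neg fun h => hm ⟨h.1, h.2.1⟩

theorem eq_zero_of_notMem_supp {m : ℕ} (hm : m ∉ supp c) (x : XV K n c.1 c.2 m) : x = 0 :=
  Subtype.ext ((Submodule.mem_bot K).1 (XV_eq_bot (K := K) (n := n) hm ▸ x.2))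

theorem coe_Xφ (hc : c.2 ≤ n) {m : ℕ} (hm : atgt ε m ∈ supp c) (x : XV K n c.1 c.2 (asrc ε m)) :
    (Xφ K n ε c.1 c.2 m x : K) = x := by
  rw [Xφ, dif_pos ⟨hm.1, hm.2, hm.2.trans hc⟩]
  rfl

theorem exists_coe_eq_mul (p q : Submodule K K) (f : p →ₗ[K] q) :
    ∃ t : K, (t ≠ 0 → p ≠ ⊥ ∧ q ≠ ⊥) ∧ ∀ x, (f x : K) = t * x := by
  rcases eq_or_ne q ⊥ with rfl | hq
  · exact ⟨0, fun h => absurd rfl h, fun x => by simp [Subsingleton.elim (f x) 0]⟩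
  rcases eq_bot_or_eq_top p with rfl | rfl
  · exact ⟨0, fun h => absurd rfl h, fun x => by simp [Subsingleton.elim x 0]⟩
  · refine ⟨f ⟨1, trivial⟩, fun _ => ⟨top_ne_bot, hq⟩, fun x => ?_⟩
    have hx : x = (x : K) • (⟨1, trivial⟩ : (⊤ : Submodule K K)) := by ext; simp
    conv_lhs => rw [hx, map_smul]
    exact mul_comm _ _

theorem exists_scalars {u v : ℕ → ℕ}
    (θ : ∀ m, XV K n d.1 d.2 (u m) →ₗ[K] XV K n c.1 c.2 (v m)) :
    ∃ t : ℕ → K, Function.support t ⊆ u ⁻¹' supp d ∩ v ⁻¹' supp c ∧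
      ∀ m x, (θ m x : K) = t m * x := by
  choose t hne ht using fun m => exists_coe_eq_mul _ _ (θ m)
  exact ⟨t, fun m hm => ⟨by_contra fun h => (hne m hm).1 (XV_eq_bot h),
    by_contra fun h => (hne m hm).2 (XV_eq_bot h)⟩, ht⟩

theorem exists_maps_of_scalars (hc : c.2 ≤ n) {u v : ℕ → ℕ} {t : ℕ → K}
    (ht : Function.support t ⊆ v ⁻¹' supp c) :
    ∃ θ : ∀ m, XV K n d.1 d.2 (u m) →ₗ[K] XV K n c.1 c.2 (v m),
      ∀ m x, (θ m x : K) = t m * x := by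
  have hmul (m : ℕ) (x : K) : t m * x ∈ XV K n c.1 c.2 (v m) := by
    by_cases hm : v m ∈ supp c
    · rw [XV_eq_top hc hm]
      trivial
    · rw [Function.notMem_support.1 (mt (@ht m) hm), zero_mul]
      exact zero_mem _
  exact ⟨fun m => (LinearMap.mulLeft K (t m)).restrict fun x _ => hmul m x, fun _ _ => rfl⟩

theorem coboundary_Xrep_eq_iff {θ : ∀ m, XV K n d.1 d.2 m →ₗ[K] XV K n c.1 c.2 m}
    {ψ : ∀ m, XV K n d.1 d.2 (asrc ε m) →ₗ[K] XV K n c.1 c.2 (atgt ε m)} :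
    coboundary (Xrep K n ε d.1 d.2) (Xrep K n ε c.1 c.2) θ = ψ ↔ ∀ m x,
      θ (atgt ε m) (Xφ K n ε d.1 d.2 m x) - Xφ K n ε c.1 c.2 m (θ (asrc ε m) x) = ψ m x :=
  funext_iff.trans (forall_congr' fun _ => LinearMap.ext_iff)

theorem coe_map_Xφ_sub_Xφ_map (hd : d.2 ≤ n) (hc : c.2 ≤ n)
    {θ : ∀ m, XV K n d.1 d.2 m →ₗ[K] XV K n c.1 c.2 m} {t : ℕ → K}
    (ht : Function.support t ⊆ supp d) (hθ : ∀ m x, (θ m x : K) = t m * x) {m : ℕ}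
    (hm : atgt ε m ∈ supp c) (x : XV K n d.1 d.2 (asrc ε m)) :
    ((θ (atgt ε m) (Xφ K n ε d.1 d.2 m x) - Xφ K n ε c.1 c.2 m (θ (asrc ε m) x) :
      XV K n c.1 c.2 (atgt ε m)) : K) = (t (atgt ε m) - t (asrc ε m)) * x := by
  have htgt : t (atgt ε m) * (Xφ K n ε d.1 d.2 m x : K) = t (atgt ε m) * x := by
    by_cases hmd : atgt ε m ∈ supp d
    · rw [coe_Xφ hd hmd]
    · rw [Function.notMem_support.1 (mt (@ht _) hmd), zero_mul, zero_mul]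
  rw [Submodule.coe_sub, hθ, htgt, coe_Xφ hc hm, hθ, sub_mul]

theorem coboundary_Xrep_eq_iff_of_scalars (hd : d.2 ≤ n) (hc : c.2 ≤ n)
    {θ : ∀ m, XV K n d.1 d.2 m →ₗ[K] XV K n c.1 c.2 m}
    {ψ : ∀ m, XV K n d.1 d.2 (asrc ε m) →ₗ[K] XV K n c.1 c.2 (atgt ε m)} {t η : ℕ → K}
    (ht : Function.support t ⊆ supp d) (hθ : ∀ m x, (θ m x : K) = t m * x)
    (hψ : ∀ m x, (ψ m x : K) = η m * x) :
    coboundary (Xrep K n ε d.1 d.2) (Xrep K n ε c.1 c.2) θ = ψ ↔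
      ∀ m ∈ arrowsBetween ε (supp d) (supp c), t (atgt ε m) - t (asrc ε m) = η m := by
  rw [coboundary_Xrep_eq_iff]
  constructor
  · rintro h m ⟨hsrc, htgt⟩
    have hone : (1 : K) ∈ XV K n d.1 d.2 (asrc ε m) := by
      rw [XV_eq_top hd hsrc]
      trivial
    have hm := congrArg Subtype.val (h m ⟨1, hone⟩)
    rwa [coe_map_Xφ_sub_Xφ_map hd hc ht hθ htgt, hψ, mul_one, mul_one] at hm
  · intro h m x
    by_cases htgt : atgt ε m ∈ supp c
    · by_cases hsrc : asrc ε m ∈ supp d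
      · apply Subtype.ext
        rw [coe_map_Xφ_sub_Xφ_map hd hc ht hθ htgt, hψ, h m ⟨hsrc, htgt⟩]
      · simp only [eq_zero_of_notMem_supp hsrc x, map_zero, sub_zero]
    · exact (eq_zero_of_notMem_supp htgt _).trans (eq_zero_of_notMem_supp htgt _).symm

theorem sub_apply_asrc_eq_iff {M : Type*} [AddCommGroup M] {t : ℕ → M} {m : ℕ} {x : M} :
    t (atgt ε m) - t (asrc ε m) = x ↔ t (m + 1) - t m = if ε m then x else -x := by
  cases hm : ε m
  · simp [asrc, atgt, hm, ← neg_inj (a := t (m + 1) - t m)]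
  · simp [asrc, atgt, hm]

theorem homZero_Xrep_iff_s13 (hd : d.2 ≤ n) (hc : c.2 ≤ n) :
    homZero (Xrep K n ε d.1 d.2) (Xrep K n ε c.1 c.2) ↔
      ∀ t : ℕ → K, Function.support t ⊆ supp d ∩ supp c →
        (∀ m ∈ arrowsBetween ε (supp d) (supp c), t (m + 1) = t m) → t = 0 := by
  have hstep (t : ℕ → K) (m : ℕ) :
      t (atgt ε m) - t (asrc ε m) = (0 : ℕ → K) m ↔ t (m + 1) = t m := by
    rw [sub_apply_asrc_eq_iff, Pi.zero_apply, neg_zero, ite_self, sub_eq_zero]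
  rw [homZero_iff_injective_coboundary, injective_iff_map_eq_zero]
  constructor
  · intro hker t ht hQ
    obtain ⟨θ, hθ⟩ := exists_maps_of_scalars (K := K) (d := d) (u := id) (v := id) hc
      (ht.trans Set.inter_subset_right)
    have hcob := (coboundary_Xrep_eq_iff_of_scalars (ψ := 0) (η := 0) hd hc
      (ht.trans Set.inter_subset_left) hθ (by simp)).2 fun m hm => (hstep t m).2 (hQ m hm)
    obtain rfl : θ = 0 := hker θ hcob
    funext m
    by_contra hm
    have hone : (1 : K) ∈ XV K n d.1 d.2 m := by
      rw [XV_eq_top hd (ht hm).1]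
      trivial
    exact hm ((hθ m ⟨1, hone⟩).trans (mul_one _)).symm
  · intro h θ hcob
    obtain ⟨t, ht, hθ⟩ := exists_scalars (u := id) (v := id) θ
    obtain rfl : t = 0 := h t ht fun m hm => (hstep t m).1
      ((coboundary_Xrep_eq_iff_of_scalars (ψ := 0) hd hc (ht.trans Set.inter_subset_left) hθ
        (by simp)).1 hcob m hm)
    exact funext fun m => LinearMap.ext fun x => Subtype.ext ((hθ m x).trans (zero_mul _))

theorem extZero_Xrep_iff_s13 (hd : d.2 ≤ n) (hc : c.2 ≤ n) :
    extZero (Xrep K n ε d.1 d.2) (Xrep K n ε c.1 c.2) ↔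
      ∀ η : ℕ → K, ∃ t : ℕ → K, Function.support t ⊆ supp d ∩ supp c ∧
        ∀ m ∈ arrowsBetween ε (supp d) (supp c), t (m + 1) - t m = η m := by
  rw [extZero_iff_surjective_coboundary]
  constructor
  · intro hsurj η
    obtain ⟨ψ, hψ⟩ := exists_maps_of_scalars (K := K) (d := d) (u := asrc ε) (v := atgt ε)
      (t := (arrowsBetween ε (supp d) (supp c)).indicator fun m => if ε m then η m else -η m) hc
      (Set.support_indicator_subset.trans Set.inter_subset_right)
    obtain ⟨θ, hcob⟩ := hsurj ψ
    obtain ⟨t, ht, hθ⟩ := exists_scalars (u := id) (v := id) θ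
    refine ⟨t, ht, fun m hm => ?_⟩
    have hstep := (coboundary_Xrep_eq_iff_of_scalars hd hc (ht.trans Set.inter_subset_left) hθ
      hψ).1 hcob m hm
    rw [Set.indicator_of_mem hm, sub_apply_asrc_eq_iff] at hstep
    rw [hstep]
    split_ifs
    · rfl
    · exact neg_neg _
  · intro h ψ
    obtain ⟨η, -, hψ⟩ := exists_scalars ψ
    obtain ⟨t, ht, hη⟩ := h fun m => if ε m then η m else -η m
    obtain ⟨θ, hθ⟩ := exists_maps_of_scalars (K := K) (d := d) (u := id) (v := id) hc
      (ht.trans Set.inter_subset_right)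
    exact ⟨θ, (coboundary_Xrep_eq_iff_of_scalars hd hc (ht.trans Set.inter_subset_left) hθ
      hψ).2 fun m hm => sub_apply_asrc_eq_iff.2 (hη m hm)⟩

end Scalars

section ExceptionalPairs

variable {n : ℕ} {ε : ℕ → Bool} {c d : ℕ × ℕ}

theorem mem_arrowsBetween_supp_iff {m : ℕ} : m ∈ arrowsBetween ε (supp d) (supp c) ↔
    (ε m = true ∧ d.1 < m ∧ m ≤ d.2 ∧ c.1 ≤ m ∧ m < c.2) ∨
      (ε m = false ∧ d.1 ≤ m ∧ m < d.2 ∧ c.1 < m ∧ m ≤ c.2) := by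
  rw [arrowsBetween, Set.mem_inter_iff, Set.mem_preimage, Set.mem_preimage, asrc, atgt, Set.mem_Ioc,
    Set.mem_Ioc]
  grind

theorem Ioo_subset_arrowsBetween_supp :
    Set.Ioo (max d.1 c.1) (min d.2 c.2) ⊆ arrowsBetween ε (supp d) (supp c) := by
  intro m hm
  rw [Set.mem_Ioo, max_lt_iff, lt_min_iff] at hm
  rw [mem_arrowsBetween_supp_iff]
  cases ε m
  · exact Or.inr ⟨rfl, by omega⟩
  · exact Or.inl ⟨rfl, by omega⟩

theorem arrowsBetween_supp_subset_Icc :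
    arrowsBetween ε (supp d) (supp c) ⊆ Set.Icc (max d.1 c.1) (min d.2 c.2) := by
  intro m hm
  rw [mem_arrowsBetween_supp_iff] at hm
  rw [Set.mem_Icc, max_le_iff, le_min_iff]
  omega

theorem excPair_Xrep_iff_boundary (hc : c.2 ≤ n) (hd : d.2 ≤ n) :
    ExcPair (Xrep K n ε c.1 c.2) (Xrep K n ε d.1 d.2) ↔
      (max d.1 c.1 < min d.2 c.2 → max d.1 c.1 ∈ arrowsBetween ε (supp d) (supp c) ∨
        min d.2 c.2 ∈ arrowsBetween ε (supp d) (supp c)) ∧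
      ¬(max d.1 c.1 ∈ arrowsBetween ε (supp d) (supp c) ∧
        min d.2 c.2 ∈ arrowsBetween ε (supp d) (supp c)) := by
  rw [ExcPair, homZero_Xrep_iff_s13 hd hc, extZero_Xrep_iff_s13 hd hc, Set.Ioc_inter_Ioc,
    forall_succ_eq_imp_eq_zero_iff Ioo_subset_arrowsBetween_supp arrowsBetween_supp_subset_Icc,
    forall_exists_forall_sub_eq_iff Ioo_subset_arrowsBetween_supp arrowsBetween_supp_subset_Icc]

theorem max_mem_arrowsBetween_supp_iff (hc : c.1 < c.2) (hd : d.1 < d.2) :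
    max d.1 c.1 ∈ arrowsBetween ε (supp d) (supp c) ↔
      (d.1 < c.1 ∧ c.1 ≤ d.2 ∧ ε c.1 = true) ∨ (c.1 < d.1 ∧ d.1 ≤ c.2 ∧ ε d.1 = false) := by
  rw [mem_arrowsBetween_supp_iff]
  grind

theorem min_mem_arrowsBetween_supp_iff (hc : c.1 < c.2) (hd : d.1 < d.2) :
    min d.2 c.2 ∈ arrowsBetween ε (supp d) (supp c) ↔
      (d.2 < c.2 ∧ c.1 ≤ d.2 ∧ ε d.2 = true) ∨ (c.2 < d.2 ∧ d.1 ≤ c.2 ∧ ε c.2 = false) := by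
  rw [mem_arrowsBetween_supp_iff]
  grind

theorem excPair_Xrep_iff (hc : c.1 < c.2 ∧ c.2 ≤ n) (hd : d.1 < d.2 ∧ d.2 ≤ n) (hcd : c ≠ d) :
    ExcPair (Xrep K n ε c.1 c.2) (Xrep K n ε d.1 d.2) ↔
      ¬Crosses ε c d ∧ (SharesEndpoint c d → Cw ε c d) := by
  rw [excPair_Xrep_iff_boundary hc.2 hd.2, max_mem_arrowsBetween_supp_iff hc.1 hd.1,
    min_mem_arrowsBetween_supp_iff hc.1 hd.1, max_lt_iff, lt_min_iff, lt_min_iff]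
  have hne : c.1 = d.1 → c.2 ≠ d.2 := fun h₁ h₂ => hcd (Prod.ext h₁ h₂)
  unfold Crosses SharesEndpoint Cw
  rcases lt_trichotomy c.1 d.1 with h₁ | h₁ | h₁ <;>
    rcases lt_trichotomy c.2 d.2 with h₂ | h₂ | h₂ <;> grind

end ExceptionalPairs

section EulerForm

variable {n : ℕ} {ε : ℕ → Bool} {c d : ℕ × ℕ} {D : Set ℕ}

/-- The Euler form of `Q_ε` on the dimension vectors given by the indicator functions of `D` and
`S`, for finite `D`. -/
noncomputable def eulerForm (ε : ℕ → Bool) (D S : Set ℕ) : ℤ :=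
  (D ∩ S).ncard - (arrowsBetween ε D S).ncard

theorem finite_preimage_asrc (hD : D.Finite) : (asrc ε ⁻¹' D).Finite := by
  refine (hD.union (hD.preimage (add_left_injective 1).injOn)).subset fun m hm => ?_
  rw [Set.mem_preimage, asrc] at hm
  split_ifs at hm
  · exact Or.inl hm
  · exact Or.inr hm

theorem eulerForm_union (hD : D.Finite) {S T : Set ℕ} (hST : Disjoint S T) :
    eulerForm ε D (S ∪ T) = eulerForm ε D S + eulerForm ε D T := by
  have harrows := finite_preimage_asrc (ε := ε) hD
  rw [eulerForm, eulerForm, eulerForm, arrowsBetween, arrowsBetween, arrowsBetween,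
    Set.preimage_union, Set.inter_union_distrib_left, Set.inter_union_distrib_left,
    Set.ncard_union_eq (hST.mono Set.inter_subset_right Set.inter_subset_right)
      (hD.inter_of_left _) (hD.inter_of_left _),
    Set.ncard_union_eq ((hST.preimage _).mono Set.inter_subset_right Set.inter_subset_right)
      (harrows.inter_of_left _) (harrows.inter_of_left _)]
  push_cast
  ring

theorem eulerForm_Iic_snd (hD : D.Finite) (hc : c.1 ≤ c.2) :
    eulerForm ε D (Set.Iic c.2) = eulerForm ε D (Set.Iic c.1) + eulerForm ε D (supp c) := by
  rw [← Set.Iic_union_Ioc_eq_Iic hc, eulerForm_union hD (Set.Iic_disjoint_Ioc le_rfl)]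

theorem eulerForm_supp_self (hd : d.1 < d.2) : eulerForm ε (supp d) (supp d) = 1 := by
  have harrows : arrowsBetween ε (supp d) (supp d) = Set.Ioo d.1 d.2 := by
    ext m
    rw [mem_arrowsBetween_supp_iff, Set.mem_Ioo]
    grind
  rw [eulerForm, harrows, Set.inter_self, Set.ncard_Ioc_nat, Set.ncard_Ioo_nat]
  omega

theorem eulerForm_supp_eq_zero_of_excPair (hc : c.2 ≤ n) (hd : d.2 ≤ n)
    (hcd : ExcPair (Xrep K n ε c.1 c.2) (Xrep K n ε d.1 d.2)) :
    eulerForm ε (supp d) (supp c) = 0 := by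
  obtain ⟨hone, hnot⟩ := (excPair_Xrep_iff_boundary hc hd).1 hcd
  rw [eulerForm, Set.Ioc_inter_Ioc, sub_eq_zero]
  rcases eq_Ioc_or_eq_Ico Ioo_subset_arrowsBetween_supp arrowsBetween_supp_subset_Icc hone hnot
    with harrows | harrows
  · rw [harrows]
  · rw [harrows, Set.ncard_Ioc_nat, Set.ncard_Ico_nat]

end EulerForm

section Forest

theorem eq_of_reachable {V α : Type*} {G : SimpleGraph V} {φ : V → α}
    (hφ : ∀ x y, G.Adj x y → φ x = φ y) {x y : V} (hxy : G.Reachable x y) : φ x = φ y := by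
  obtain ⟨p⟩ := hxy
  induction p with
  | nil => rfl
  | cons h _ ih => exact (hφ _ _ h).trans ih

theorem isAcyclic_fromEdgeSet_of_potential {V α : Type*} {k : ℕ} (u v : Fin k → V)
    (φ : Fin k → V → α) (hconst : ∀ a b, b < a → φ a (u b) = φ a (v b))
    (hsep : ∀ a, φ a (u a) ≠ φ a (v a)) :
    (SimpleGraph.fromEdgeSet {e | ∃ a, e = s(u a, v a)}).IsAcyclic := by
  induction k with
  | zero => simp
  | succ k ih =>
    set G := SimpleGraph.fromEdgeSet {e | ∃ a : Fin k, e = s(u a.castSucc, v a.castSucc)} with hG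
    have hsplit : SimpleGraph.fromEdgeSet {e | ∃ a, e = s(u a, v a)} =
        G ⊔ SimpleGraph.edge (u (Fin.last k)) (v (Fin.last k)) := by
      rw [hG, SimpleGraph.edge, ← SimpleGraph.fromEdgeSet_union]
      congr 1
      ext e
      simp [Fin.exists_fin_succ', or_comm]
    have hadj (x y : V) (hxy : G.Adj x y) : φ (Fin.last k) x = φ (Fin.last k) y := by
      obtain ⟨⟨a, ha⟩, -⟩ := (SimpleGraph.fromEdgeSet_adj _).1 hxy
      have heq := hconst (Fin.last k) a.castSucc (Fin.castSucc_lt_last a)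
      rcases Sym2.eq_iff.1 ha with ⟨rfl, rfl⟩ | ⟨rfl, rfl⟩
      · exact heq
      · exact heq.symm
    rw [hsplit]
    refine SimpleGraph.IsAcyclic.sup_edge_of_not_reachable
      (fun hreach => hsep _ (eq_of_reachable hadj hreach)) (ih _ _ (fun a => φ a.castSucc) ?_ ?_)
    · exact fun a b hab => hconst _ _ (Fin.castSucc_lt_castSucc_iff.2 hab)
    · exact fun a => hsep _

end Forest

section Sequences

variable {n k : ℕ} {ε : ℕ → Bool}

theorem chordGraphF_isAcyclic_of_isExcSeq {c : Fin k → ℕ × ℕ}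
    (hc : ∀ a, (c a).1 < (c a).2 ∧ (c a).2 ≤ n) (hexc : IsExcSeq K n ε c) :
    (chordGraphF c).IsAcyclic := by
  have hpot (a b : Fin k) := eulerForm_Iic_snd (ε := ε) (Set.finite_Ioc (c a).1 (c a).2) (hc b).1.le
  refine isAcyclic_fromEdgeSet_of_potential _ _
    (fun a y => eulerForm ε (supp (c a)) (Set.Iic y)) (fun a b hba => ?_) fun a => ?_
  · rw [hpot, eulerForm_supp_eq_zero_of_excPair (hc b).2 (hc a).2 (hexc b a hba), add_zero]
  · rw [hpot, eulerForm_supp_self (hc a).1]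
    exact (lt_add_one _).ne

theorem Crosses.symm {c d : ℕ × ℕ} (h : Crosses ε c d) : Crosses ε d c := by
  unfold Crosses at *
  tauto

theorem not_crosses_self (c : ℕ × ℕ) : ¬Crosses ε c c := by
  simp [Crosses]

theorem SharesEndpoint.symm {c d : ℕ × ℕ} (h : SharesEndpoint c d) : SharesEndpoint d c := by
  unfold SharesEndpoint at *
  tauto

theorem not_cw_self {c : ℕ × ℕ} (hc : c.1 < c.2) : ¬Cw ε c c := by
  simp [Cw, hc.ne']

theorem cw_iff_not_cw {c d : ℕ × ℕ} (hc : c.1 < c.2) (hd : d.1 < d.2) (hcd : c ≠ d)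
    (hshare : SharesEndpoint c d) : Cw ε c d ↔ ¬Cw ε d c := by
  have hne : c.1 = d.1 → c.2 ≠ d.2 := fun h₁ h₂ => hcd (Prod.ext h₁ h₂)
  unfold Cw SharesEndpoint at *
  grind

theorem isExcSeq_iff {c : Fin k → ℕ × ℕ} (hc : ∀ a, (c a).1 < (c a).2 ∧ (c a).2 ≤ n)
    (hinj : Function.Injective c) :
    IsExcSeq K n ε c ↔ IsDiagramF ε c ∧
      ∀ a b, a < b → SharesEndpoint (c a) (c b) → Cw ε (c a) (c b) := by
  have hpair {a b : Fin k} (hab : a < b) :=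
    excPair_Xrep_iff (K := K) (ε := ε) (hc a) (hc b) (hinj.ne hab.ne)
  constructor
  · intro hexc
    have hcross {a b : Fin k} (hab : a < b) : ¬Crosses ε (c a) (c b) :=
      ((hpair hab).1 (hexc a b hab)).1
    refine ⟨⟨fun a b => ?_, chordGraphF_isAcyclic_of_isExcSeq hc hexc⟩,
      fun a b hab => ((hpair hab).1 (hexc a b hab)).2⟩
    rcases lt_trichotomy a b with hab | rfl | hba
    · exact hcross hab
    · exact not_crosses_self _
    · exact fun h => hcross hba h.symm
  · rintro ⟨hdiag, hcw⟩ a b hab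
    exact (hpair hab).2 ⟨hdiag.1 a b, hcw a b hab⟩

theorem isDiagramF_comp_equiv_iff {k' : ℕ} (e : Fin k' ≃ Fin k) {c : Fin k → ℕ × ℕ} :
    IsDiagramF ε (c ∘ e) ↔ IsDiagramF ε c := by
  simp only [IsDiagramF, chordGraphF, Function.comp_apply, e.forall_congr_left, e.exists_congr_left,
    e.apply_symm_apply]

theorem forall_lt_cw_iff {c : Fin k → ℕ × ℕ} (hc : ∀ a, (c a).1 < (c a).2)
    (hinj : Function.Injective c) :
    (∀ a b, a < b → SharesEndpoint (c a) (c b) → Cw ε (c a) (c b)) ↔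
      ∀ a b, SharesEndpoint (c a) (c b) → Cw ε (c a) (c b) → a < b := by
  constructor
  · intro h a b hshare hcw
    rcases lt_trichotomy a b with hab | rfl | hba
    · exact hab
    · exact absurd hcw (not_cw_self (hc a))
    · exact absurd (h b a hba hshare.symm)
        ((cw_iff_not_cw (hc a) (hc b) (hinj.ne hba.ne') hshare).1 hcw)
  · intro h a b hab hshare
    rw [cw_iff_not_cw (hc a) (hc b) (hinj.ne hab.ne) hshare]
    exact fun hcw => hab.asymm (h b a hshare.symm hcw)

theorem forall_cw_lt_comp_rev_iff {c : Fin k → ℕ × ℕ} :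
    (∀ a b, SharesEndpoint ((c ∘ Fin.rev) a) ((c ∘ Fin.rev) b) →
      Cw ε ((c ∘ Fin.rev) a) ((c ∘ Fin.rev) b) → b < a) ↔
      ∀ a b, SharesEndpoint (c a) (c b) → Cw ε (c a) (c b) → a < b := by
  rw [Fin.rev_surjective.forall₂]
  simp only [Function.comp_apply, Fin.rev_rev, Fin.rev_lt_rev]

theorem isExcSeq_iff_comp_rev {c : Fin k → ℕ × ℕ}
    (hc : ∀ a, (c a).1 < (c a).2 ∧ (c a).2 ≤ n) (hinj : Function.Injective c) :
    IsExcSeq K n ε c ↔ IsDiagramF ε (c ∘ Fin.rev) ∧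
      ∀ a b, SharesEndpoint ((c ∘ Fin.rev) a) ((c ∘ Fin.rev) b) →
        Cw ε ((c ∘ Fin.rev) a) ((c ∘ Fin.rev) b) → b < a := by
  rw [isExcSeq_iff hc hinj, forall_lt_cw_iff (fun a => (hc a).1) hinj, forall_cw_lt_comp_rev_iff]
  exact and_congr_left' (isDiagramF_comp_equiv_iff Fin.revPerm).symm

end Sequences

/-- Theorem 3.9 (ESbij): a sequence of pairwise distinct indecomposables is an exceptional
sequence iff its chords form a strand diagram in which earlier chords are clockwise from
later ones whenever they share an endpoint; equivalently, labeling the `ℓ`-th chord by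
`k+1-ℓ` gives a good labeling, and reversal `c ↦ c ∘ Fin.rev` is a bijection between
exceptional sequences of length `k` and good-labeled strand diagrams with `k` strands
(where the chord with label `ℓ+1` is the value at `ℓ`). -/
theorem exceptional_sequences_are_labeled_strand_diagrams (K : Type) [Field K]
    (n k : ℕ) (ε : ℕ → Bool) (hk : k ≤ n) :
    (∀ c : Fin k → ℕ × ℕ, (∀ a, (c a).1 < (c a).2 ∧ (c a).2 ≤ n) → Function.Injective c →
      (IsExcSeq K n ε c ↔
        (IsDiagramF ε c ∧
          ∀ a b : Fin k, a < b → SharesEndpoint (c a) (c b) → Cw ε (c a) (c b)))) ∧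
    Set.BijOn (fun (c : Fin k → ℕ × ℕ) => c ∘ Fin.rev)
      {c : Fin k → ℕ × ℕ | (∀ a, (c a).1 < (c a).2 ∧ (c a).2 ≤ n) ∧
        Function.Injective c ∧ IsExcSeq K n ε c}
      {g : Fin k → ℕ × ℕ | (∀ a, (g a).1 < (g a).2 ∧ (g a).2 ≤ n) ∧
        Function.Injective g ∧ IsDiagramF ε g ∧
        ∀ a b : Fin k, SharesEndpoint (g a) (g b) → Cw ε (g a) (g b) → b < a} := by
  refine ⟨fun c hc hinj => isExcSeq_iff hc hinj,
    Equiv.bijOn (Fin.revPerm.arrowCongr (.refl _)) fun c => ?_⟩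
  have hvalid : (∀ a : Fin k, (c a.rev).1 < (c a.rev).2 ∧ (c a.rev).2 ≤ n) ↔
      ∀ a, (c a).1 < (c a).2 ∧ (c a).2 ≤ n :=
    (Fin.rev_surjective.forall (p := fun a => (c a).1 < (c a).2 ∧ (c a).2 ≤ n)).symm
  have hinjective : Function.Injective (c ∘ Fin.rev) ↔ Function.Injective c :=
    Fin.revPerm.injective_comp c
  exact (and_congr hvalid (and_congr_left' hinjective)).trans
    (and_congr_right fun hc => and_congr_right fun hinj => (isExcSeq_iff_comp_rev hc hinj).symm)

end ESPaper
end
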